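/- (Zudilin's identity for Vasilyev's integrals) For all integers n ≥ 0 and E ≥ 2, ∫_{[0,1]^E} ∏_{i=1}^{E} x_i^n(1−x_i)^n / Q_E(x₁,…,x_E)^{n+1} dx₁⋯dx_E = (n!^{2E+1}(3n+2)!/(2n+1)!^{E+2}) · _{E+4}F_{E+3}[3n+2, (3/2)n+2, n+1, …, n+1; (3/2)n+1, 2n+2, …, 2n+2; (−1)^{E+1}], where Q_E(x₁,…,x_E) = 1 − (⋯(1−(1−x_E)x_{E−1})⋯)x₁, there are E+2 repeated upper parameters n+1 and E+2 repeated lower parameters 2n+2. -/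

import Mathlib

open MeasureTheory

/-- Pochhammer symbol `(x)_k = x(x+1)⋯(x+k-1)`. -/
noncomputable def poch (x : ℂ) (k : ℕ) : ℂ := ∏ i ∈ Finset.range k, (x + (i : ℂ))

/-- Generalized hypergeometric series with upper parameters `α`, lower parameters `β`. -/
noncomputable def hyp (α β : List ℂ) (z : ℂ) : ℂ :=
  ∑' k : ℕ, ((α.map fun w => poch w k).prod /
    ((β.map fun w => poch w k).prod * (Nat.factorial k : ℂ))) * z ^ k

/-- Nested expression: `nestR [x₁,…,x_m] = 1 - (1 - (⋯(1 - x_m)x_{m-1}⋯))x₁`. -/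
def nestR : List ℝ → ℝ
  | [] => 1
  | t :: rest => 1 - nestR rest * t

/-- The Vasilyev-type integral `J_m(a₀,…,a_m; b₁,…,b_m; z)`. -/
noncomputable def Jint (m : ℕ) (a b : ℕ → ℂ) (z : ℂ) : ℂ :=
  ∫ x in Set.univ.pi fun _ : Fin m => Set.Ioo (0:ℝ) 1,
    (∏ i : Fin m, ((x i : ℂ) ^ (a (i.1+1) - 1) *
        ((1 - x i : ℝ) : ℂ) ^ (b (i.1+1) - a (i.1+1) - 1))) /
      ((1 - ((nestR (List.ofFn x).tail * (List.ofFn x).headI : ℝ) : ℂ) * z) ^ (a 0))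

/-!
Expand `(1 - u x₀)⁻ʰ`, with `u` the nested expression in the remaining variables, in powers of
`u x₀`. Integrating out one variable after another then acts on moment sequences by the lower
triangular operators `c ↦ ∑ᵢ (-1)ⁱ C(j, i) B(p + i + 1, q + 1) cᵢ`. When `p + p' + q = s`, such an
operator sends the explicit sequence `eigenseq s p' k` to a multiple of `eigenseq s p k`, the factor
`± q! (p + k)! / (s + 1 - p + k)!` being the `k`-th ratio of a well-poised series. The innermost
moment sequence is the constant `1`, whose expansion in eigensequences is a terminating
very-well-poised summation, proved by the Wilf–Zeilberger method. Finally Gauss's summation at `1`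
evaluates the sum over the powers of `u x₀` for each eigensequence separately.
-/

section

open Finset Filter Asymptotics
open scoped Nat

/-! ### Beta values and Gauss's summation -/

theorem isTheta_const_add_natCast (c : ℝ) :
    (fun k : ℕ => c + k) =Θ[atTop] fun k => (k : ℝ) :=
  (IsLittleO.add_isEquivalent (isLittleO_const_left.2 <| Or.inr <|
    tendsto_norm_atTop_atTop.comp tendsto_natCast_atTop_atTop) IsEquivalent.refl).isTheta

theorem isTheta_factorial_div_factorial (a b : ℕ) :
    (fun k : ℕ => ((a + k)! : ℝ) / (b + k)!) =Θ[atTop] fun k => (k : ℝ) ^ ((a : ℝ) - b) := by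
  have key (a : ℕ) : (fun k : ℕ => ((a + k)! : ℝ)) =Θ[atTop]
      fun k => (k ! : ℝ) * (k : ℝ) ^ a := by
    induction a with
    | zero => simpa using isTheta_rfl
    | succ a ih =>
      refine (EventuallyEq.of_eq (funext fun k => ?_)).trans_isTheta <|
        ((isTheta_const_add_natCast (a + 1)).mul ih).trans_eventuallyEq <|
          .of_eq (funext fun k => ?_)
      · rw [add_right_comm a 1 k, Nat.factorial_succ]
        push_cast
        ring
      · ring
  refine ((key a).div (key b)).trans_eventuallyEq ?_
  filter_upwards [eventually_gt_atTop 0] with k hk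
  rw [mul_div_mul_left _ _ (by positivity), Real.rpow_sub (by positivity), Real.rpow_natCast,
    Real.rpow_natCast]

/-- The beta value `B(a + 1, b + 1)` at natural arguments, in closed form. -/
noncomputable def natBeta (a b : ℕ) : ℝ := a ! * b ! / (a + b + 1)!

theorem natBeta_nonneg (a b : ℕ) : 0 ≤ natBeta a b := by unfold natBeta; positivity

theorem integral_pow_mul_one_sub_pow (a b : ℕ) :
    ∫ t in Set.Ioo (0 : ℝ) 1, t ^ a * (1 - t) ^ b = natBeta a b := by
  have hbeta := Complex.betaIntegral_eq_Gamma_mul_div (a + 1) (b + 1)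
    (by rw [← Nat.cast_succ, Complex.natCast_re]; positivity)
    (by rw [← Nat.cast_succ, Complex.natCast_re]; positivity)
  rw [show (a : ℂ) + 1 + (b + 1) = ((a + b + 1 : ℕ) : ℂ) + 1 by push_cast; ring,
    Complex.Gamma_nat_eq_factorial, Complex.Gamma_nat_eq_factorial,
    Complex.Gamma_nat_eq_factorial] at hbeta
  have hcast : Complex.betaIntegral (a + 1) (b + 1) =
      ((∫ t in (0 : ℝ)..1, t ^ a * (1 - t) ^ b : ℝ) : ℂ) := by
    rw [Complex.betaIntegral, ← intervalIntegral.integral_ofReal]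
    congr 1
    ext t
    simp
  rw [← integral_Ioc_eq_integral_Ioo, ← intervalIntegral.integral_of_le zero_le_one]
  apply Complex.ofReal_injective
  rw [← hcast, hbeta, natBeta]
  push_cast
  rfl

theorem integrable_restrict_Ioo_of_continuous {f : ℝ → ℝ} (hf : Continuous f) (a b : ℝ) :
    Integrable f (volume.restrict (Set.Ioo a b)) :=
  hf.integrableOn_Icc.mono_set Set.Ioo_subset_Icc_self

theorem sum_neg_one_pow_mul_choose_mul_natBeta (a b N : ℕ) :
    ∑ l ∈ range (N + 1), (-1 : ℝ) ^ l * N.choose l * natBeta (a + l) b = natBeta a (b + N) := by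
  have hexpand (t : ℝ) : t ^ a * (1 - t) ^ (b + N) =
      ∑ l ∈ range (N + 1), (-1 : ℝ) ^ l * N.choose l * (t ^ (a + l) * (1 - t) ^ b) := by
    have hbinom := add_pow (-t) 1 N
    rw [neg_add_eq_sub] at hbinom
    rw [pow_add, ← mul_assoc, hbinom, mul_sum]
    refine sum_congr rfl fun l _ => ?_
    rw [neg_pow, one_pow]
    ring
  simp_rw [← integral_pow_mul_one_sub_pow, hexpand]
  rw [integral_finsetSum _ fun (l : ℕ) _ => integrable_restrict_Ioo_of_continuous (by fun_prop) 0 1]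
  simp_rw [MeasureTheory.integral_const_mul]

theorem hasSum_integral_div_one_sub_pow {α : Type*} [MeasurableSpace α] {μ : Measure α}
    {w u : α → ℝ} (r : ℕ) (hw : ∀ᵐ x ∂μ, 0 ≤ w x) (hu : ∀ᵐ x ∂μ, u x ∈ Set.Ico (0 : ℝ) 1)
    (hint : ∀ j : ℕ, Integrable (fun x => w x * u x ^ j) μ)
    (hsum : Summable fun j : ℕ => ((j + r).choose r : ℝ) * ∫ x, w x * u x ^ j ∂μ) :
    HasSum (fun j : ℕ => ((j + r).choose r : ℝ) * ∫ x, w x * u x ^ j ∂μ)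
      (∫ x, w x / (1 - u x) ^ (r + 1) ∂μ) := by
  have hnorm (j : ℕ) : ∫ x, ‖((j + r).choose r : ℝ) * (w x * u x ^ j)‖ ∂μ =
      ((j + r).choose r : ℝ) * ∫ x, w x * u x ^ j ∂μ := by
    rw [← MeasureTheory.integral_const_mul]
    refine integral_congr_ae ?_
    filter_upwards [hw, hu] with x hwx hux
    exact Real.norm_of_nonneg <|
      mul_nonneg (Nat.cast_nonneg _) <| mul_nonneg hwx <| pow_nonneg hux.1 j
  have hlimit : ∫ x, ∑' j : ℕ, ((j + r).choose r : ℝ) * (w x * u x ^ j) ∂μ =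
      ∫ x, w x / (1 - u x) ^ (r + 1) ∂μ := by
    refine integral_congr_ae ?_
    filter_upwards [hu] with x hux
    have hgeom := (hasSum_choose_mul_geometric_of_norm_lt_one r
      (by rw [Real.norm_of_nonneg hux.1]; exact hux.2)).mul_left (w x)
    rw [← mul_one_div, ← hgeom.tsum_eq]
    exact tsum_congr fun j => by ring
  have h := hasSum_integral_of_summable_integral_norm (μ := μ)
    (F := fun j x => ((j + r).choose r : ℝ) * (w x * u x ^ j)) (fun j => (hint j).const_mul _)
    (hsum.congr fun j => (hnorm j).symm)
  simp_rw [MeasureTheory.integral_const_mul] at h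
  rwa [hlimit] at h

theorem hasSum_gauss (a b q : ℕ) :
    HasSum (fun i : ℕ => ((a + i)! : ℝ) * (b + i)! / (i ! * (a + b + q + 2 + i)!))
      (a ! * b ! * q ! / ((a + q + 1)! * (b + q + 1)!)) := by
  have hterm (i : ℕ) : ((i + a).choose a : ℝ) *
      ∫ t in Set.Ioo (0 : ℝ) 1, t ^ b * (1 - t) ^ (a + q + 1) * t ^ i =
      (a + q + 1)! / a ! * (((a + i)! : ℝ) * (b + i)! / (i ! * (a + b + q + 2 + i)!)) := by
    have hmoment : ∫ t in Set.Ioo (0 : ℝ) 1, t ^ b * (1 - t) ^ (a + q + 1) * t ^ i =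
        natBeta (b + i) (a + q + 1) := by
      rw [← integral_pow_mul_one_sub_pow]
      congr 1 with t
      ring
    rw [hmoment, natBeta, add_comm i a, Nat.cast_add_choose,
      show b + i + (a + q + 1) + 1 = a + b + q + 2 + i by ring]
    field_simp
  have hsummable : Summable fun i : ℕ =>
      ((a + i)! : ℝ) * (b + i)! / (i ! * (a + b + q + 2 + i)!) := by
    have hO := (isTheta_factorial_div_factorial a 0).mul
      (isTheta_factorial_div_factorial b (a + b + q + 2))
    refine summable_of_isBigO_nat (Real.summable_nat_rpow.2 (show -((q : ℝ) + 2) < -1 by linarith))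
      (hO.1.congr' (.of_forall fun i => ?_) ?_)
    · simp only [zero_add, div_mul_div_comm]
    · filter_upwards [eventually_gt_atTop 0] with i hi
      rw [← Real.rpow_add (by positivity)]
      congr 1
      push_cast
      ring
  have hsum := hasSum_integral_div_one_sub_pow (μ := volume.restrict (Set.Ioo (0 : ℝ) 1))
    (w := fun t => t ^ b * (1 - t) ^ (a + q + 1)) (u := id) a
    (by
      filter_upwards [ae_restrict_mem measurableSet_Ioo] with t ht
      exact mul_nonneg (pow_nonneg ht.1.le _) (pow_nonneg (sub_nonneg.2 ht.2.le) _))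
    (by
      filter_upwards [ae_restrict_mem measurableSet_Ioo] with t ht using ⟨ht.1.le, ht.2⟩)
    (fun j => integrable_restrict_Ioo_of_continuous (by fun_prop) 0 1)
    (by simp_rw [id, hterm]; exact hsummable.mul_left _)
  have hvalue : ∫ t in Set.Ioo (0 : ℝ) 1, t ^ b * (1 - t) ^ (a + q + 1) / (1 - id t) ^ (a + 1) =
      natBeta b q := by
    rw [← integral_pow_mul_one_sub_pow]
    refine setIntegral_congr_fun measurableSet_Ioo fun t ht => ?_
    have : 1 - t ≠ 0 := (sub_pos.2 ht.2).ne'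
    simp only [id]
    rw [show a + q + 1 = q + (a + 1) by ring, pow_add (1 - t) q]
    field_simp
  rw [hvalue] at hsum
  simp_rw [id, hterm] at hsum
  have hbeta : natBeta b q =
      (a + q + 1)! / a ! * (a ! * b ! * q ! / ((a + q + 1)! * (b + q + 1)!) : ℝ) := by
    unfold natBeta
    field_simp
  rw [hbeta] at hsum
  exact (hasSum_mul_left_iff (by positivity)).1 hsum

/-! ### Eigensequences -/

/-- The coefficient ratio `Γ(h + k) / Γ(1 + h₀ - h + k)` of a well-poised hypergeometric series,
for `h₀ = s + 2` and `h = p + 1`. The truncated subtraction is harmless for `p ≤ s + 1`. -/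
noncomputable def wellPoisedRatio (s p k : ℕ) : ℝ := (p + k)! / (s + 1 - p + k)!

/-- The `k`-th eigensequence, in the variable `j`. For `p + p' + q = s`, the operator
`c ↦ fun j => ∑ i ≤ j, (-1) ^ i * j.choose i * natBeta (p + i) q * c i` sends `eigenseq s p' k` to a
multiple of `eigenseq s p k`. It vanishes for `j < k`. -/
noncomputable def eigenseq (s p k j : ℕ) : ℝ :=
  j.descFactorial k * (s + 1 - p + j)! / (s + 2 + j + k)!

theorem eigenseq_nonneg (s p k j : ℕ) : 0 ≤ eigenseq s p k j := by unfold eigenseq; positivity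

theorem eigenseq_eq_zero {j k : ℕ} (h : j < k) (s p : ℕ) : eigenseq s p k j = 0 := by
  simp [eigenseq, Nat.descFactorial_eq_zero_iff_lt.2 h]

theorem eigenseq_add (s p k i : ℕ) :
    eigenseq s p k (k + i) =
      (k + i)! * (s + 1 - p + (k + i))! / (i ! * (s + 2 + (k + i) + k)!) := by
  have h := Nat.factorial_mul_descFactorial (Nat.le_add_right k i)
  rw [Nat.add_sub_cancel_left] at h
  rw [eigenseq, ← h]
  push_cast
  field_simp

theorem sum_mul_eigenseq {s p p' q : ℕ} (hs : p + p' + q = s) (k j : ℕ) :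
    ∑ i ∈ range (j + 1), (-1 : ℝ) ^ i * j.choose i * natBeta (p + i) q * eigenseq s p' k i =
      (-1) ^ k * q ! * wellPoisedRatio s p k * eigenseq s p k j := by
  rcases lt_or_ge j k with hjk | hkj
  · rw [eigenseq_eq_zero hjk, mul_zero]
    refine sum_eq_zero fun i hi => ?_
    rw [eigenseq_eq_zero (by grind), mul_zero]
  obtain ⟨N, rfl⟩ := Nat.exists_eq_add_of_le hkj
  have hterm (l : ℕ) (hl : l ∈ range (N + 1)) :
      (-1 : ℝ) ^ (k + l) * (k + N).choose (k + l) * natBeta (p + (k + l)) q *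
        eigenseq s p' k (k + l) =
      (-1) ^ k * q ! * (k + N)! / (N ! * (s + 1 - p + k)!) *
        ((-1) ^ l * N.choose l * natBeta (p + k + l) (s + 1 - p + k)) := by
    obtain ⟨d, rfl⟩ := Nat.exists_eq_add_of_le (Nat.lt_succ_iff.1 (mem_range.1 hl))
    rw [eigenseq_add, natBeta, natBeta, ← add_assoc k l d, Nat.cast_add_choose,
      Nat.cast_add_choose, show s + 1 - p' = p + q + 1 by omega,
      show s + 1 - p = p' + q + 1 by omega, ← hs,
      show p + (k + l) + q + 1 = p + q + 1 + (k + l) by ring,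
      show p + k + l + (p' + q + 1 + k) + 1 = p + p' + q + 2 + (k + l) + k by ring]
    rw [← add_assoc p k l, pow_add]
    field_simp
  have hzero (i : ℕ) (hi : i ∈ range k) : (-1 : ℝ) ^ i * (k + N).choose i * natBeta (p + i) q *
      eigenseq s p' k i = 0 := by
    rw [eigenseq_eq_zero (mem_range.1 hi), mul_zero]
  rw [add_assoc, sum_range_add, sum_eq_zero hzero, zero_add, sum_congr rfl hterm, ← mul_sum,
    sum_neg_one_pow_mul_choose_mul_natBeta, wellPoisedRatio, eigenseq_add, natBeta,
    show p + k + (s + 1 - p + k + N) + 1 = s + 2 + (k + N) + k by omega,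
    add_assoc (s + 1 - p) k N]
  field_simp

/-- The coefficients expanding the constant sequence `1` in the eigensequences `eigenseq s p k`. -/
noncomputable def eigencoeff (s p k : ℕ) : ℝ :=
  (2 * k + s + 2) * (k + s + 1)! / (k ! * p !) * wellPoisedRatio s p k

/-- The Wilf–Zeilberger mate of `eigencoeff s p k * eigenseq s p k j`. -/
noncomputable def wzMate (s p k j : ℕ) : ℝ :=
  k * (k + s + 1 - p) * (k + s + 1)! / (k ! * p !) * wellPoisedRatio s p k *
    ((j + 1).descFactorial k / (j + 1) * (s + 1 - p + j)! / (s + 2 + j + k)!)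

theorem eigencoeff_mul_eigenseq_succ_sub {s p : ℕ} (hp : p ≤ s) (k j : ℕ) :
    eigencoeff s p k * eigenseq s p k (j + 1) - eigencoeff s p k * eigenseq s p k j =
      wzMate s p k j - wzMate s p (k + 1) j := by
  obtain ⟨c, rfl⟩ := Nat.exists_eq_add_of_le hp
  have hj : (j.descFactorial k : ℝ) = (j + 1).descFactorial k * (j + 1 - k) / (j + 1) := by
    rw [eq_div_iff (by positivity)]
    rcases le_or_gt k (j + 1) with hk | hk
    · have h := Nat.succ_descFactorial j k
      rw [← Nat.cast_inj (R := ℝ), Nat.cast_mul, Nat.cast_mul, Nat.cast_sub hk] at h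
      push_cast at h
      linarith
    · simp [Nat.descFactorial_eq_zero_iff_lt.2 hk,
        Nat.descFactorial_eq_zero_iff_lt.2 ((Nat.lt_succ_self j).trans hk)]
  rw [wzMate, wzMate, Nat.succ_descFactorial_succ, eigencoeff, eigenseq, eigenseq, wellPoisedRatio,
    wellPoisedRatio, Nat.cast_mul, hj, show p + c + 1 - p = c + 1 by omega,
    show c + 1 + (j + 1) = c + 1 + j + 1 by ring,
    show p + c + 2 + (j + 1) + k = p + c + 2 + j + k + 1 by ring,
    show p + c + 2 + j + (k + 1) = p + c + 2 + j + k + 1 by ring,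
    show k + 1 + (p + c) + 1 = k + (p + c) + 1 + 1 by ring, ← add_assoc p k 1,
    ← add_assoc (c + 1) k 1, Nat.factorial_succ (c + 1 + j), Nat.factorial_succ (p + c + 2 + j + k),
    Nat.factorial_succ (k + (p + c) + 1), Nat.factorial_succ k, Nat.factorial_succ (p + k),
    Nat.factorial_succ (c + 1 + k)]
  push_cast
  field_simp
  ring

theorem sum_eigencoeff_mul_eigenseq {s p : ℕ} (hp : p ≤ s) {N j : ℕ} (hj : j < N) :
    ∑ k ∈ range N, eigencoeff s p k * eigenseq s p k j = 1 := by
  induction j with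
  | zero =>
    have hzero (k : ℕ) (_ : k ∈ range N) (hk : k ≠ 0) :
        eigencoeff s p k * eigenseq s p k 0 = 0 := by
      rw [eigenseq_eq_zero (Nat.pos_of_ne_zero hk), mul_zero]
    rw [sum_eq_single_of_mem 0 (mem_range.2 hj) hzero, eigencoeff, eigenseq, wellPoisedRatio]
    simp only [add_zero, zero_add, Nat.descFactorial_zero, Nat.factorial_zero, Nat.cast_one,
      Nat.factorial_succ (s + 1)]
    push_cast
    field_simp
    ring
  | succ j ih =>
    rw [← sub_eq_zero, ← ih (Nat.lt_of_succ_lt hj), ← sum_sub_distrib]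
    simp_rw [eigencoeff_mul_eigenseq_succ_sub hp]
    rw [sum_range_sub']
    simp [wzMate, Nat.descFactorial_eq_zero_iff_lt.2 hj]

theorem hasSum_eigencoeff_mul_eigenseq {s p : ℕ} (hp : p ≤ s) (j : ℕ) :
    HasSum (fun k => eigencoeff s p k * eigenseq s p k j) 1 := by
  rw [← sum_eigencoeff_mul_eigenseq hp (Nat.lt_succ_self j)]
  refine hasSum_sum_of_ne_finset_zero fun k hk => ?_
  rw [eigenseq_eq_zero (by simpa using hk), mul_zero]

/-! ### Moments on the unit cube -/

/-- The open unit cube, the domain of integration of `Jint`. -/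
def unitCube (m : ℕ) : Set (Fin m → ℝ) := Set.univ.pi fun _ => Set.Ioo 0 1

theorem mem_unitCube {m : ℕ} {x : Fin m → ℝ} : x ∈ unitCube m ↔ ∀ i, x i ∈ Set.Ioo (0 : ℝ) 1 :=
  Set.mem_univ_pi

theorem measurableSet_unitCube (m : ℕ) : MeasurableSet (unitCube m) :=
  .univ_pi fun _ => measurableSet_Ioo

theorem integrableOn_unitCube_of_continuous {m : ℕ} {f : (Fin m → ℝ) → ℝ} (hf : Continuous f) :
    IntegrableOn f (unitCube m) :=
  (hf.integrableOn_Icc (a := fun _ => 0) (b := fun _ => 1)).mono_set fun _ hx =>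
    ⟨fun i => (hx i trivial).1.le, fun i => (hx i trivial).2.le⟩

theorem setIntegral_unitCube_succ (m : ℕ) (f : ℝ → ℝ) (g : (Fin m → ℝ) → ℝ) :
    ∫ x in unitCube (m + 1), f (x 0) * g (fun i => x i.succ) =
      (∫ t in Set.Ioo (0 : ℝ) 1, f t) * ∫ y in unitCube m, g y := by
  simp only [unitCube, volume_pi, Measure.restrict_pi_pi]
  rw [← integral_prod_mul]
  exact (measurePreserving_piFinSuccAbove
    (fun _ : Fin (m + 1) => (volume : Measure ℝ).restrict (Set.Ioo 0 1)) 0).integral_comp'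
    fun y : ℝ × (Fin m → ℝ) => f y.1 * g y.2

/-- The integrand weight `∏ xᵢ ^ pᵢ (1 - xᵢ) ^ qᵢ`, with coordinates indexed from `0`. -/
noncomputable def betaWeight (p q : ℕ → ℕ) {m : ℕ} (x : Fin m → ℝ) : ℝ :=
  ∏ i : Fin m, x i ^ p i * (1 - x i) ^ q i

theorem betaWeight_succ (p q : ℕ → ℕ) {m : ℕ} (x : Fin (m + 1) → ℝ) :
    betaWeight p q x = x 0 ^ p 0 * (1 - x 0) ^ q 0 *
      betaWeight (fun i => p (i + 1)) (fun i => q (i + 1)) fun i => x i.succ := by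
  simp only [betaWeight, Fin.prod_univ_succ, Fin.val_zero, Fin.val_succ]

theorem continuous_betaWeight (p q : ℕ → ℕ) (m : ℕ) :
    Continuous (betaWeight p q : (Fin m → ℝ) → ℝ) := by
  unfold betaWeight
  fun_prop

theorem betaWeight_nonneg (p q : ℕ → ℕ) {m : ℕ} {x : Fin m → ℝ} (hx : x ∈ unitCube m) :
    0 ≤ betaWeight p q x :=
  prod_nonneg fun i _ => mul_nonneg (pow_nonneg (mem_unitCube.1 hx i).1.le _)
    (pow_nonneg (sub_nonneg.2 (mem_unitCube.1 hx i).2.le) _)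

theorem continuous_nestR_ofFn (m : ℕ) : Continuous fun x : Fin m → ℝ => nestR (List.ofFn x) := by
  induction m with
  | zero => simpa only [List.ofFn_zero, nestR] using continuous_const
  | succ m ih =>
    simp only [List.ofFn_succ, nestR]
    have htail := ih.comp (f := fun (x : Fin (m + 1) → ℝ) i => x i.succ) (by fun_prop)
    exact continuous_const.sub (htail.mul (continuous_apply 0))

theorem nestR_ofFn_mem_Icc {m : ℕ} {x : Fin m → ℝ} (hx : x ∈ unitCube m) :
    nestR (List.ofFn x) ∈ Set.Icc (0 : ℝ) 1 := by
  induction m with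
  | zero => simp [nestR]
  | succ m ih =>
    rw [mem_unitCube] at hx
    have htail := ih (mem_unitCube.2 fun i => hx i.succ)
    simp only [List.ofFn_succ, nestR]
    exact ⟨sub_nonneg.2 (mul_le_one₀ htail.2 (hx 0).1.le (hx 0).2.le),
      sub_le_self _ (mul_nonneg htail.1 (hx 0).1.le)⟩

/-- The `j`-th moment of the nested expression in `m` variables, for the weight
`betaWeight p q`. -/
noncomputable def nestMoment (p q : ℕ → ℕ) (m j : ℕ) : ℝ :=
  ∫ x in unitCube m, betaWeight p q x * nestR (List.ofFn x) ^ j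

theorem nestMoment_zero (p q : ℕ → ℕ) (j : ℕ) : nestMoment p q 0 j = 1 := by
  simp [nestMoment, betaWeight, nestR, unitCube, Measure.real]

theorem setIntegral_betaWeight_mul_pow (p q : ℕ → ℕ) (m j : ℕ) :
    ∫ x in unitCube (m + 1), betaWeight p q x * (nestR (List.ofFn x).tail * x 0) ^ j =
      natBeta (p 0 + j) (q 0) * nestMoment (fun i => p (i + 1)) (fun i => q (i + 1)) m j := by
  rw [← integral_pow_mul_one_sub_pow, nestMoment, ← setIntegral_unitCube_succ]
  congr 1 with x
  rw [betaWeight_succ, List.ofFn_succ, List.tail_cons]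
  ring

theorem continuous_betaWeight_mul_pow (p q : ℕ → ℕ) (m j : ℕ) :
    Continuous fun x : Fin (m + 1) → ℝ => betaWeight p q x *
      (nestR (List.ofFn x).tail * x 0) ^ j := by
  simp only [List.ofFn_succ, List.tail_cons]
  have htail := (continuous_nestR_ofFn m).comp
    (f := fun (x : Fin (m + 1) → ℝ) i => x i.succ) (by fun_prop)
  exact (continuous_betaWeight p q (m + 1)).mul ((htail.mul (continuous_apply 0)).pow j)

theorem nestMoment_succ (p q : ℕ → ℕ) (m j : ℕ) :
    nestMoment p q (m + 1) j = ∑ i ∈ range (j + 1), (-1 : ℝ) ^ i * j.choose i *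
      natBeta (p 0 + i) (q 0) * nestMoment (fun i => p (i + 1)) (fun i => q (i + 1)) m i := by
  have hexpand (x : Fin (m + 1) → ℝ) : betaWeight p q x * nestR (List.ofFn x) ^ j =
      ∑ i ∈ range (j + 1), (-1 : ℝ) ^ i * j.choose i *
        (betaWeight p q x * (nestR (List.ofFn x).tail * x 0) ^ i) := by
    rw [List.ofFn_succ, List.tail_cons, nestR, sub_eq_neg_add, add_pow, mul_sum]
    refine sum_congr rfl fun i _ => ?_
    rw [neg_pow, one_pow]
    ring
  rw [nestMoment]
  simp_rw [hexpand]
  rw [integral_finsetSum _ fun i _ =>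
    (integrableOn_unitCube_of_continuous (continuous_betaWeight_mul_pow p q m i)).const_mul _]
  simp_rw [MeasureTheory.integral_const_mul, setIntegral_betaWeight_mul_pow, ← mul_assoc]

theorem hasSum_nestMoment {s : ℕ} {p q : ℕ → ℕ} {m : ℕ}
    (hs : ∀ i < m, p i + p (i + 1) + q i = s) (hm : p m ≤ s) (j : ℕ) :
    HasSum (fun k => (∏ i ∈ range m, (-1) ^ k * (q i)! * wellPoisedRatio s (p i) k) *
      (eigencoeff s (p m) k * eigenseq s (p 0) k j)) (nestMoment p q m j) := by
  induction m generalizing p q j with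
  | zero => simpa [nestMoment_zero] using hasSum_eigencoeff_mul_eigenseq hm j
  | succ m ih =>
    rw [nestMoment_succ]
    convert! hasSum_sum fun i (_ : i ∈ range (j + 1)) =>
      (ih (p := fun i => p (i + 1)) (q := fun i => q (i + 1))
        (fun i hi => hs (i + 1) (by lia)) hm i).mul_left
        ((-1 : ℝ) ^ i * j.choose i * natBeta (p 0 + i) (q 0)) using 2 with k
    calc
      _ = (∏ i ∈ range m, (-1) ^ k * (q (i + 1))! * wellPoisedRatio s (p (i + 1)) k) *
          eigencoeff s (p (m + 1)) k *
            ((-1) ^ k * (q 0)! * wellPoisedRatio s (p 0) k * eigenseq s (p 0) k j) := by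
        rw [prod_range_succ']
        ring
      _ = _ := by
        rw [← sum_mul_eigenseq (hs 0 m.succ_pos), mul_sum]
        exact sum_congr rfl fun i _ => by ring

/-! ### Summation over eigensequences -/

theorem hasSum_choose_mul_natBeta_mul_eigenseq {s p₀ p₁ p₂ q₀ q₁ : ℕ} (h₀ : p₀ + p₁ + q₀ = s)
    (h₁ : p₁ + p₂ + q₁ = s) (k : ℕ) :
    HasSum (fun j => (j + p₀).choose p₀ * natBeta (p₁ + j) q₁ * eigenseq s p₂ k j)
      (q₀ ! * q₁ ! / p₀ ! * (wellPoisedRatio s p₀ k * wellPoisedRatio s p₁ k)) := by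
  have hzero (j : ℕ) (hj : j ∉ Set.range (k + ·)) :
      (j + p₀).choose p₀ * natBeta (p₁ + j) q₁ * eigenseq s p₂ k j = 0 := by
    rw [eigenseq_eq_zero (not_le.1 fun h => hj ⟨j - k, Nat.add_sub_cancel' h⟩), mul_zero]
  rw [← (add_right_injective k).hasSum_iff hzero]
  convert! (hasSum_gauss (p₀ + k) (p₁ + k) q₀).mul_left (q₁ ! / p₀ ! : ℝ) using 1
  · ext i
    rw [Function.comp_apply, eigenseq_add, natBeta, Nat.add_comm (k + i) p₀, Nat.cast_add_choose,
      show s + 1 - p₂ = p₁ + q₁ + 1 by omega, ← h₀, ← add_assoc p₀, ← add_assoc p₁,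
      show p₁ + k + i + q₁ + 1 = p₁ + q₁ + 1 + (k + i) by ring,
      show p₀ + k + (p₁ + k) + q₀ + 2 + i = p₀ + p₁ + q₀ + 2 + (k + i) + k by ring]
    field_simp
  · rw [wellPoisedRatio, wellPoisedRatio, show s + 1 - p₀ + k = p₁ + k + q₀ + 1 by omega,
      show s + 1 - p₁ + k = p₀ + k + q₀ + 1 by omega]
    field_simp

theorem hasSum_tsum_mul_of_nonneg {ι κ : Type*} {c γ : κ → ℝ} {g : κ → ι → ℝ} {M : ι → ℝ}
    (hg : ∀ k j, 0 ≤ g k j) (hγ : ∀ k, HasSum (g k) (γ k)) (hc : Summable fun k => c k * γ k)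
    (hM : ∀ j, HasSum (fun k => c k * g k j) (M j)) : HasSum M (∑' k, c k * γ k) := by
  have hrow (k : κ) : HasSum (fun j => |c k * g k j|) |c k * γ k| := by
    simp_rw [abs_mul, abs_of_nonneg (hg k _), abs_of_nonneg ((hγ k).nonneg (hg k))]
    exact (hγ k).mul_left _
  have habs : Summable fun y : κ × ι => |c y.1 * g y.1 y.2| := by
    rw [summable_prod_of_nonneg fun _ => abs_nonneg _]
    exact ⟨fun k => (hrow k).summable, hc.abs.congr fun k => (hrow k).tsum_eq.symm⟩
  have htotal := habs.of_abs.hasSum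
  rw [← (htotal.prod_fiberwise fun k => (hγ k).mul_left (c k)).tsum_eq] at htotal
  exact ((Equiv.prodComm ι κ).hasSum_iff.2 htotal).prod_fiberwise hM

/-- The `k`-th term of the very-well-poised series with `h₀ = s + 2` and parameters
`hᵢ = p i + 1` for `i < r`, at argument `1` and without its leading normalisation. -/
noncomputable def veryWellPoisedTerm (s : ℕ) (p : ℕ → ℕ) (r k : ℕ) : ℝ :=
  (2 * k + s + 2) * (k + s + 1)! / k ! * ∏ i ∈ range r, wellPoisedRatio s (p i) k

theorem summable_veryWellPoisedTerm {s r : ℕ} {p : ℕ → ℕ} (hp : ∀ i < r, p i ≤ s)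
    (h : 2 * ∑ i ∈ range r, p i + s + 3 < r * (s + 1)) :
    Summable (veryWellPoisedTerm s p r) := by
  have hlin : (fun k : ℕ => 2 * (k : ℝ) + s + 2) =Θ[atTop] fun k => (k : ℝ) := by
    have h2 := (isTheta_const_mul_left (two_ne_zero' ℝ)).2 (isTheta_const_add_natCast ((s + 2) / 2))
    exact (EventuallyEq.of_eq (funext fun k => by ring)).trans_isTheta h2
  have hO := (hlin.mul (isTheta_factorial_div_factorial (s + 1) 0)).mul <|
    IsTheta.finsetProd fun i (_ : i ∈ range r) =>
      isTheta_factorial_div_factorial (p i) (s + 1 - p i)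
  have hexp : (1 : ℝ) + ((s + 1 : ℕ) - (0 : ℕ)) +
      ∑ i ∈ range r, ((p i : ℝ) - (s + 1 - p i : ℕ)) < -1 := by
    have hterm (i : ℕ) (hi : i ∈ range r) : (p i : ℝ) - (s + 1 - p i : ℕ) = 2 * p i - (s + 1) := by
      rw [Nat.cast_sub ((hp i (mem_range.1 hi)).trans s.le_succ)]
      push_cast
      ring
    rw [sum_congr rfl hterm, sum_sub_distrib, ← mul_sum, sum_const, card_range, nsmul_eq_mul]
    rify at h
    push_cast
    linarith
  refine summable_of_isBigO_nat (Real.summable_nat_rpow.2 hexp)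
    (hO.1.congr' (.of_forall fun k => ?_) ?_)
  · simp only [veryWellPoisedTerm, wellPoisedRatio, zero_add, mul_div_assoc, add_assoc k s 1,
      Nat.add_comm (s + 1) k]
  · filter_upwards [eventually_gt_atTop 0] with k hk
    have hk' : (0 : ℝ) < k := Nat.cast_pos.2 hk
    rw [Real.rpow_add hk', Real.rpow_add hk', Real.rpow_one, Real.rpow_sum_of_pos hk']

theorem le_of_adjacent_sum_eq {s E : ℕ} {p q : ℕ → ℕ}
    (hs : ∀ i ≤ E, p i + p (i + 1) + q i = s) {i : ℕ} (hi : i ≤ E + 1) : p i ≤ s := by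
  rcases i with - | i
  · have := hs 0 E.zero_le
    lia
  · have := hs i (by lia)
    lia

theorem hasSum_choose_mul_natBeta_mul_nestMoment {s m : ℕ} {p q : ℕ → ℕ}
    (hs : ∀ i ≤ m + 1, p i + p (i + 1) + q i = s)
    (hconv : 2 * ∑ i ∈ range (m + 3), p i + s + 3 < (m + 3) * (s + 1)) :
    HasSum (fun j => (j + p 0).choose (p 0) * (natBeta (p 1 + j) (q 1) *
        nestMoment (fun i => p (i + 2)) (fun i => q (i + 2)) m j))
      ((∏ i ∈ range (m + 2), ((q i)! : ℝ)) / ((p 0)! * (p (m + 2))!) *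
        ∑' k, ((-1) ^ m) ^ k * veryWellPoisedTerm s p (m + 3) k) := by
  have hp (i : ℕ) (hi : i < m + 3) : p i ≤ s := le_of_adjacent_sum_eq hs (Nat.lt_succ_iff.1 hi)
  have hterm (k : ℕ) :
      (∏ i ∈ range m, (-1 : ℝ) ^ k * (q (i + 2))! * wellPoisedRatio s (p (i + 2)) k) *
        eigencoeff s (p (m + 2)) k * ((q 0)! * (q 1)! / (p 0)! *
          (wellPoisedRatio s (p 0) k * wellPoisedRatio s (p 1) k)) =
      (∏ i ∈ range (m + 2), ((q i)! : ℝ)) / ((p 0)! * (p (m + 2))!) *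
        (((-1) ^ m) ^ k * veryWellPoisedTerm s p (m + 3) k) := by
    rw [veryWellPoisedTerm, eigencoeff, prod_range_succ _ (m + 2), prod_range_succ' _ (m + 1),
      prod_range_succ' _ m, prod_range_succ' _ (m + 1), prod_range_succ' _ m, prod_mul_distrib,
      prod_mul_distrib, prod_const, card_range, pow_right_comm]
    field_simp
  have hsum : Summable fun k => ((-1 : ℝ) ^ m) ^ k * veryWellPoisedTerm s p (m + 3) k := by
    refine .of_norm ((summable_veryWellPoisedTerm hp (mod_cast hconv)).abs.congr fun k => ?_)
    simp
  rw [← tsum_mul_left]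
  simp_rw [← hterm]
  refine hasSum_tsum_mul_of_nonneg (fun k j => ?_) (fun k => hasSum_choose_mul_natBeta_mul_eigenseq
    (hs 0 (by lia)) (hs 1 (by lia)) k) ?_ fun j => ?_
  · exact mul_nonneg (mul_nonneg (Nat.cast_nonneg _) (natBeta_nonneg _ _)) (eigenseq_nonneg _ _ _ _)
  · simp_rw [hterm]
    exact hsum.mul_left _
  · convert! (hasSum_nestMoment (p := fun i => p (i + 2)) (q := fun i => q (i + 2))
      (fun i hi => hs (i + 2) (by lia)) (hp (m + 2) (by lia)) j).mul_left
      (((j + p 0).choose (p 0) : ℝ) * natBeta (p 1 + j) (q 1)) using 1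
    · ext k
      ring
    · ring

theorem setIntegral_betaWeight_div_eq_tsum {s m : ℕ} {p q : ℕ → ℕ}
    (hs : ∀ i ≤ m + 1, p i + p (i + 1) + q i = s)
    (hconv : 2 * ∑ i ∈ range (m + 3), p i + s + 3 < (m + 3) * (s + 1)) :
    ∫ x in unitCube (m + 1), betaWeight (fun i => p (i + 1)) (fun i => q (i + 1)) x /
        (1 - nestR (List.ofFn x).tail * x 0) ^ (p 0 + 1) =
      (∏ i ∈ range (m + 2), ((q i)! : ℝ)) / ((p 0)! * (p (m + 2))!) *
        ∑' k, ((-1) ^ m) ^ k * veryWellPoisedTerm s p (m + 3) k := by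
  have hseries := hasSum_choose_mul_natBeta_mul_nestMoment hs hconv
  have hmoment (j : ℕ) := setIntegral_betaWeight_mul_pow
    (fun i => p (i + 1)) (fun i => q (i + 1)) m j
  have hu (x : Fin (m + 1) → ℝ) (hx : x ∈ unitCube (m + 1)) :
      nestR (List.ofFn x).tail * x 0 ∈ Set.Ico (0 : ℝ) 1 := by
    rw [mem_unitCube] at hx
    have htail := nestR_ofFn_mem_Icc (mem_unitCube.2 fun i => hx i.succ)
    rw [List.ofFn_succ, List.tail_cons]
    exact ⟨mul_nonneg htail.1 (hx 0).1.le,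
      (mul_le_of_le_one_left (hx 0).1.le htail.2).trans_lt (hx 0).2⟩
  simp only [zero_add, add_assoc, Nat.reduceAdd] at hmoment
  have hintegral := hasSum_integral_div_one_sub_pow (μ := volume.restrict (unitCube (m + 1)))
    (w := betaWeight (fun i => p (i + 1)) (fun i => q (i + 1)))
    (u := fun x => nestR (List.ofFn x).tail * x 0) (p 0)
    (by
      filter_upwards [ae_restrict_mem (measurableSet_unitCube _)] with x hx
      exact betaWeight_nonneg _ _ hx)
    (by filter_upwards [ae_restrict_mem (measurableSet_unitCube _)] with x hx using hu x hx)
    (fun j => integrableOn_unitCube_of_continuous (continuous_betaWeight_mul_pow _ _ m j))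
    (by simpa only [hmoment] using hseries.summable)
  simp only [hmoment] at hintegral
  exact hintegral.unique hseries

/-! ### Hypergeometric form -/

theorem Jint_succ_eq_setIntegral {m r : ℕ} {p q : ℕ → ℕ} {a b : ℕ → ℂ} (h₀ : a 0 = r + 1)
    (ha : ∀ i ≤ m, a (i + 1) = p i + 1) (hb : ∀ i ≤ m, b (i + 1) = a (i + 1) + q i + 1) :
    Jint (m + 1) a b 1 = ((∫ x in unitCube (m + 1), betaWeight p q x /
      (1 - nestR (List.ofFn x).tail * x 0) ^ (r + 1) : ℝ) : ℂ) := by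
  rw [← integral_complex_ofReal, Jint, unitCube]
  refine integral_congr_ae (.of_forall fun x => ?_)
  have hweight (i : Fin (m + 1)) : (x i : ℂ) ^ (a (i + 1) - 1) *
      ((1 - x i : ℝ) : ℂ) ^ (b (i + 1) - a (i + 1) - 1) =
      ((x i ^ p i * (1 - x i) ^ q i : ℝ) : ℂ) := by
    rw [hb i (Nat.lt_succ_iff.1 i.2), ha i (Nat.lt_succ_iff.1 i.2), add_sub_cancel_right,
      add_assoc, add_sub_cancel_left, add_sub_cancel_right, Complex.cpow_natCast,
      Complex.cpow_natCast]
    push_cast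
    rfl
  simp only [hweight]
  rw [h₀, ← Nat.cast_succ, Complex.cpow_natCast, mul_one, betaWeight, List.ofFn_succ,
    List.headI_cons]
  push_cast
  rfl

theorem poch_natCast_add_one (a k : ℕ) : poch ((a : ℂ) + 1) k = (a + k)! / a ! := by
  rw [eq_div_iff (Nat.cast_ne_zero.2 a.factorial_ne_zero), poch]
  induction k with
  | zero => simp
  | succ k ih =>
    rw [prod_range_succ, mul_right_comm, ih, ← add_assoc, Nat.factorial_succ]
    push_cast
    ring

theorem poch_add_one_mul (x : ℂ) (k : ℕ) : poch (x + 1) k * x = poch x k * (x + k) := by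
  unfold poch
  induction k with
  | zero => simp
  | succ k ih =>
    rw [prod_range_succ, prod_range_succ]
    push_cast
    linear_combination (x + 1 + k) * ih

theorem poch_ne_zero {x : ℂ} (hx : ∀ i : ℕ, x ≠ -i) (k : ℕ) : poch x k ≠ 0 :=
  prod_ne_zero_iff.2 fun i _ h => hx i (eq_neg_of_add_eq_zero_left h)

theorem poch_half_add_two_div (s k : ℕ) :
    poch ((s : ℂ) / 2 + 2) k / poch ((s : ℂ) / 2 + 1) k = (2 * k + s + 2) / (s + 2) := by
  have hne : poch ((s : ℂ) / 2 + 1) k ≠ 0 := by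
    refine poch_ne_zero (fun i h => ?_) k
    have hcast : ((s + 2 + 2 * i : ℕ) : ℂ) = 0 := by
      push_cast
      linear_combination 2 * h
    exact absurd (Nat.cast_eq_zero.1 hcast) (by lia)
  have hshift := poch_add_one_mul ((s : ℂ) / 2 + 1) k
  rw [add_assoc, one_add_one_eq_two] at hshift
  rw [div_eq_div_iff hne (by exact_mod_cast (s + 1).succ_ne_zero)]
  linear_combination 2 * hshift

theorem prod_ofFn_poch_natCast_add_one (r k : ℕ) (c : ℕ → ℕ) :
    (List.ofFn fun i : Fin r => poch ((c i : ℂ) + 1) k).prod =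
      (∏ i ∈ range r, ((c i + k)! : ℂ)) / ∏ i ∈ range r, ((c i)! : ℂ) := by
  simp_rw [List.prod_ofFn, poch_natCast_add_one, ← prod_div_distrib]
  exact Fin.prod_univ_eq_prod_range (fun i => ((c i + k)! / (c i)! : ℂ)) r

theorem ofReal_tsum_veryWellPoisedTerm {s r : ℕ} {p : ℕ → ℕ} (hp : ∀ i < r, p i ≤ s) (z : ℝ) :
    ((∑' k, z ^ k * veryWellPoisedTerm s p r k : ℝ) : ℂ) =
      (s + 2)! * (∏ i ∈ range r, ((p i)! : ℂ)) / (∏ i ∈ range r, ((s + 1 - p i)! : ℂ)) *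
        hyp ((s + 2) :: (s / 2 + 2) :: List.ofFn fun i : Fin r => (p i : ℂ) + 1)
          ((s / 2 + 1) :: List.ofFn fun i : Fin r => (s : ℂ) + 2 - p i) z := by
  have hlower (i : Fin r) : (s : ℂ) + 2 - p i = (s + 1 - p i : ℕ) + 1 := by
    rw [Nat.cast_sub ((hp i i.2).trans s.le_succ)]
    push_cast
    ring
  have hhead (k : ℕ) : poch ((s : ℂ) + 2) k = (s + 1 + k)! / (s + 1)! := by
    rw [← poch_natCast_add_one, Nat.cast_succ, add_assoc, one_add_one_eq_two]
  have hfact (a : ℕ) : (a ! : ℂ) ≠ 0 := Nat.cast_ne_zero.2 a.factorial_ne_zero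
  have hprod (c : ℕ → ℕ) : ∏ i ∈ range r, ((c i)! : ℂ) ≠ 0 :=
    prod_ne_zero_iff.2 fun i _ => hfact _
  have hs : (s : ℂ) + 2 ≠ 0 := by exact_mod_cast (s + 1).succ_ne_zero
  simp_rw [hlower]
  rw [Complex.ofReal_tsum, hyp, ← tsum_mul_left]
  congr 1 with k
  simp only [List.map_cons, List.map_ofFn, List.prod_cons, Function.comp_def]
  rw [prod_ofFn_poch_natCast_add_one r k p, prod_ofFn_poch_natCast_add_one r k fun i => s + 1 - p i,
    mul_left_comm (poch (_ + 2) k), mul_assoc (poch (_ / 2 + 1) k), mul_div_mul_comm,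
    poch_half_add_two_div, hhead]
  simp only [veryWellPoisedTerm, wellPoisedRatio, prod_div_distrib, add_comm k s,
    add_right_comm s k 1, Nat.factorial_succ (s + 1)]
  push_cast
  rw [add_assoc (s : ℂ) 1 1, one_add_one_eq_two]
  field_simp [hfact, hprod p, hprod fun i => s + 1 - p i, hprod fun i => s + 1 - p i + k]

/-- In Zudilin's notation `h₀ = s + 2` and `hᵢ₊₁ = p i + 1`, and the strict inequality is his
convergence condition `1 + h₀ > 2 / (E + 1) * ∑ hᵢ`. -/
theorem zudilin_vasilyev_general {s E : ℕ} {p q : ℕ → ℕ} (hE : E ≠ 0)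
    (hs : ∀ i ≤ E, p i + p (i + 1) + q i = s)
    (hconv : 2 * ∑ i ∈ range (E + 2), (p i + 1) < (E + 1) * (s + 3)) :
    Jint E (fun i => p i + 1) (fun i => s + 2 - p (i + 1)) 1 =
      (∏ i ∈ range (E + 1), ((q i)! : ℂ)) * (∏ i ∈ range E, ((p (i + 1))! : ℂ)) * (s + 2)! /
          (∏ i ∈ range (E + 2), ((s + 1 - p i)! : ℂ)) *
        hyp ((s + 2) :: (s / 2 + 2) :: List.ofFn fun i : Fin (E + 2) => (p i : ℂ) + 1)
          ((s / 2 + 1) :: List.ofFn fun i : Fin (E + 2) => (s : ℂ) + 2 - p i)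
          ((-1) ^ (E + 1)) := by
  obtain ⟨m, rfl⟩ := Nat.exists_eq_succ_of_ne_zero hE
  have hconv' : 2 * ∑ i ∈ range (m + 3), p i + s + 3 < (m + 3) * (s + 1) := by
    rw [sum_add_distrib, sum_const, card_range, smul_eq_mul] at hconv
    linarith
  have hb (i : ℕ) (hi : i ≤ m) :
      (s : ℂ) + 2 - p (i + 1 + 1) = (p (i + 1) : ℂ) + 1 + q (i + 1) + 1 := by
    rw [← hs (i + 1) (by lia)]
    push_cast
    ring
  have hsign : (-1 : ℂ) ^ (m + 1 + 1) = ((-1) ^ m : ℝ) := by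
    push_cast
    ring
  have hfact (a : ℕ) : (a ! : ℂ) ≠ 0 := Nat.cast_ne_zero.2 a.factorial_ne_zero
  rw [Jint_succ_eq_setIntegral rfl (fun _ _ => rfl) hb,
    setIntegral_betaWeight_div_eq_tsum hs hconv', Complex.ofReal_mul, ofReal_tsum_veryWellPoisedTerm
      fun i hi => le_of_adjacent_sum_eq hs (Nat.lt_succ_iff.1 hi),
    hsign, prod_range_succ (fun i => ((p i)! : ℂ)), prod_range_succ' (fun i => ((p i)! : ℂ))]
  push_cast
  field_simp [hfact]

end

/-- Zudilin's identity for Vasilyev's integrals `J_{E,n}`. -/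
theorem zudilin_vasilyev (n E : ℕ) (hE : 2 ≤ E) :
    Jint E (fun _ => (n : ℂ) + 1)
        (fun _ => 2 * (n : ℂ) + 2) 1 =
      ((Nat.factorial n : ℂ) ^ (2*E+1) * (Nat.factorial (3*n+2) : ℂ) /
          (Nat.factorial (2*n+1) : ℂ) ^ (E+2)) *
        hyp ((3*(n:ℂ)+2) :: (3*(n:ℂ)/2 + 2) :: List.replicate (E+2) ((n:ℂ)+1))
          ((3*(n:ℂ)/2 + 1) :: List.replicate (E+2) (2*(n:ℂ)+2))
          ((-1) ^ (E+1)) := by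
  have hconv : 2 * ∑ _i ∈ Finset.range (E + 2), (n + 1) < (E + 1) * (3 * n + 3) := by
    rw [Finset.sum_const, Finset.card_range, smul_eq_mul]
    nlinarith
  have hlower : 3 * (n : ℂ) + 2 - n = 2 * n + 2 := by ring
  have h := zudilin_vasilyev_general (p := fun _ => n) (q := fun _ => n) (by lia)
    (fun _ _ => by ring) hconv
  simp only [Finset.prod_const, Finset.card_range, List.ofFn_const, Nat.cast_mul, Nat.cast_ofNat,
    hlower, show 3 * n + 1 - n = 2 * n + 1 by lia] at h
  rw [h, ← pow_add, show E + 1 + E = 2 * E + 1 by ring]
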